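/- Let p > 1 and 0 < q < m be real numbers. Set η₁ = (p−1)(m+1)+p, η₂ = (p−1)(q+1)+p, θ = p(m−q)/((m+1)η₂), ℓ = (m−q)/((m+1)η₂), 𝓑(a,b) = ∫_0^1 t^{a−1}(1−t)^{b−1} dt, and C = [ 2^p (p−1)^{1−p} η₁^{η₁/(m−q)} (m−q)^{1−2p} η₂^{−η₂/(m−q)} 𝓑(η₂/(p(m−q)), (2p−1)/p)^p ]^{−ℓ}. Then for every continuously differentiable function u : ℝ → ℝ with ∫_ℝ |u|^{q+1} dx < ∞ and ∫_ℝ |u'|^p dx < ∞, one has (∫_ℝ |u|^{m+1} dx)^{1/(m+1)} ≤ C · (∫_ℝ |u|^{q+1} dx)^{(1−θ)/(q+1)} · (∫_ℝ |u'|^p dx)^{θ/p}; moreover C is the smallest constant for which this inequality holds for all such u. -/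

import Mathlib

open Filter Set Topology MeasureTheory

/-!
Put `a = q + 1` and `b = m + 1`, and write `A`, `B`, `D` for the integrals of `|u| ^ a`, `|u| ^ b`,
`|u'| ^ p`. The integrability assumptions force `u` to vanish at infinity, and both sides of the
inequality have the same degree in `u`, so one may assume `max |u| = 1`. With the potential
`W(t) = |t| ^ a - |t| ^ b`, Hölder's inequality gives
`∫ |u'| W(u) ^ ((p - 1) / p) ≤ D ^ (1 / p) (A - B) ^ ((p - 1) / p)`, while the left-hand side is at
least `2 ∫₀¹ W ^ ((p - 1) / p)`, since `|u|` climbs from `0` to `1` and comes back. Weighted AM-GM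
applied to `A = (A - B) + B` turns this into the asserted bound, without optimizing over dilations.

Equality holds in the transition and Hölder steps for the even bump of height `1` solving
`u' = -W(u) ^ (1 / p)` on the positive half-line; the recurrence of the Beta function shows that its
ratio `B / A` is exactly the one for which AM-GM is an equality too.
-/

section BetaIntegrals

open ProbabilityTheory (beta)

variable {n x y : ℝ}

lemma ofReal_beta_integrand {t : ℝ} (ht : t ∈ Ioo (0 : ℝ) 1) :
    (t : ℂ) ^ ((x : ℂ) - 1) * (1 - (t : ℂ)) ^ ((y : ℂ) - 1) =
      ((t ^ (x - 1) * (1 - t) ^ (y - 1) : ℝ) : ℂ) := by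
  rw [Complex.ofReal_mul, Complex.ofReal_cpow ht.1.le, Complex.ofReal_cpow (sub_nonneg.2 ht.2.le)]
  push_cast
  rfl

lemma integrableOn_beta_integrand (hx : 0 < x) (hy : 0 < y) :
    IntegrableOn (fun t : ℝ => t ^ (x - 1) * (1 - t) ^ (y - 1)) (Ioo 0 1) := by
  have hcomplex := (intervalIntegrable_iff_integrableOn_Ioo_of_le zero_le_one).1
    (Complex.betaIntegral_convergent (u := x) (v := y) (by simpa) (by simpa))
  exact (hcomplex.congr_fun (fun _ ht => ofReal_beta_integrand ht) measurableSet_Ioo).re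

lemma setIntegral_beta_integrand (hx : 0 < x) (hy : 0 < y) :
    ∫ t in Ioo (0 : ℝ) 1, t ^ (x - 1) * (1 - t) ^ (y - 1) = beta x y := by
  rw [ProbabilityTheory.beta_eq_betaIntegralReal x y hx hy, Complex.betaIntegral,
    intervalIntegral.integral_of_le zero_le_one, integral_Ioc_eq_integral_Ioo,
    setIntegral_congr_fun measurableSet_Ioo fun _ ht => ofReal_beta_integrand ht,
    integral_complex_ofReal, Complex.ofReal_re]

lemma add_mul_beta_add_one_right (hx : 0 < x) (hy : 0 < y) :
    (x + y) * beta x (y + 1) = y * beta x y := by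
  have hΓ : Real.Gamma (x + y) ≠ 0 := (Real.Gamma_pos_of_pos (add_pos hx hy)).ne'
  have hxy : x + y ≠ 0 := (add_pos hx hy).ne'
  simp only [beta, ← add_assoc, Real.Gamma_add_one hy.ne', Real.Gamma_add_one hxy]
  field_simp

lemma image_rpow_Ioo_zero_one (hn : 0 < n) : (fun s : ℝ => s ^ n) '' Ioo 0 1 = Ioo 0 1 := by
  ext t
  constructor
  · rintro ⟨s, hs, rfl⟩
    exact ⟨Real.rpow_pos_of_pos hs.1 _, Real.rpow_lt_one hs.1.le hs.2 hn⟩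
  · intro ht
    exact ⟨t ^ n⁻¹, ⟨Real.rpow_pos_of_pos ht.1 _, Real.rpow_lt_one ht.1.le ht.2 (inv_pos.2 hn)⟩,
      Real.rpow_inv_rpow ht.1.le hn.ne'⟩

lemma injOn_rpow_Ioo_zero_one (hn : 0 < n) : InjOn (fun s : ℝ => s ^ n) (Ioo 0 1) :=
  fun _ hs _ ht h => (Real.rpow_left_inj hs.1.le ht.1.le hn.ne').1 h

lemma hasDerivWithinAt_rpow_Ioo_zero_one (n : ℝ) {s : ℝ} (hs : s ∈ Ioo (0 : ℝ) 1) :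
    HasDerivWithinAt (fun s : ℝ => s ^ n) (n * s ^ (n - 1)) (Ioo 0 1) s :=
  (Real.hasDerivAt_rpow_const (Or.inl hs.1.ne')).hasDerivWithinAt

lemma abs_deriv_smul_beta_integrand (hn : 0 < n) {s : ℝ} (hs : s ∈ Ioo (0 : ℝ) 1) :
    |n * s ^ (n - 1)| • ((s ^ n) ^ (x - 1) * (1 - s ^ n) ^ (y - 1)) =
      n * (s ^ (n * x - 1) * (1 - s ^ n) ^ (y - 1)) := by
  have hs0 : 0 < s := hs.1
  rw [abs_of_pos (by positivity), smul_eq_mul, ← Real.rpow_mul hs0.le,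
    show n * x - 1 = (n - 1) + n * (x - 1) by ring, Real.rpow_add hs0]
  ring

lemma integrableOn_rpow_mul_one_sub_rpow (hn : 0 < n) (hx : 0 < x) (hy : 0 < y) :
    IntegrableOn (fun s : ℝ => s ^ (n * x - 1) * (1 - s ^ n) ^ (y - 1)) (Ioo 0 1) := by
  have himage := integrableOn_beta_integrand hx hy
  rw [← image_rpow_Ioo_zero_one hn, integrableOn_image_iff_integrableOn_abs_deriv_smul
    measurableSet_Ioo (fun _ => hasDerivWithinAt_rpow_Ioo_zero_one n)
    (injOn_rpow_Ioo_zero_one hn)] at himage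
  have hmul := himage.congr_fun (fun _ hs => abs_deriv_smul_beta_integrand hn hs) measurableSet_Ioo
  exact (integrable_const_mul_iff hn.ne'.isUnit _).1 hmul

lemma setIntegral_rpow_mul_one_sub_rpow (hn : 0 < n) (hx : 0 < x) (hy : 0 < y) :
    ∫ s in Ioo (0 : ℝ) 1, s ^ (n * x - 1) * (1 - s ^ n) ^ (y - 1) = beta x y / n := by
  rw [eq_div_iff hn.ne', mul_comm, ← integral_const_mul,
    ← setIntegral_congr_fun measurableSet_Ioo fun _ hs => abs_deriv_smul_beta_integrand hn hs,
    ← integral_image_eq_integral_abs_deriv_smul measurableSet_Ioo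
      (fun _ => hasDerivWithinAt_rpow_Ioo_zero_one n) (injOn_rpow_Ioo_zero_one hn)
      (fun t => t ^ (x - 1) * (1 - t) ^ (y - 1)),
    image_rpow_Ioo_zero_one hn, setIntegral_beta_integrand hx hy]

end BetaIntegrals

section Decay

variable {a p r L : ℝ} {u : ℝ → ℝ} {l : Filter ℝ}

lemma tendsto_zero_of_integrable_abs_rpow_of_tendsto_abs_rpow [l.NeBot]
    (hl : ∀ s ∈ l, volume s = ⊤) (ha : 0 < a) (hr : 0 < r)
    (hint : Integrable fun x => |u x| ^ a) (hlim : Tendsto (fun x => |u x| ^ r) l (𝓝 L)) :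
    Tendsto u l (𝓝 0) := by
  have habs : Tendsto (fun x => |u x|) l (𝓝 (L ^ r⁻¹)) := by
    simpa only [Real.rpow_rpow_inv (abs_nonneg _) hr.ne'] using
      hlim.rpow_const (p := r⁻¹) (Or.inr (inv_pos.2 hr).le)
  have hlimit : (L ^ r⁻¹) ^ a = 0 := (hint.integrableAtFilter l).eq_zero_of_tendsto hl
    (habs.rpow_const (Or.inr ha.le))
  have hroot : L ^ r⁻¹ = 0 :=
    (Real.rpow_eq_zero (ge_of_tendsto' habs fun _ => abs_nonneg _) ha.ne').1 hlimit
  exact (tendsto_zero_iff_abs_tendsto_zero _).2 (hroot ▸ habs)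

lemma abs_deriv_abs_rpow (hr : 1 < r) (t : ℝ) : |r * |t| ^ (r - 2) * t| = r * |t| ^ (r - 1) := by
  rw [abs_mul, abs_mul, abs_of_pos (zero_lt_one.trans hr),
    abs_of_nonneg (Real.rpow_nonneg (abs_nonneg t) _), mul_assoc]
  rcases eq_or_ne t 0 with rfl | ht
  · rw [abs_zero, mul_zero, Real.zero_rpow (sub_pos.2 hr).ne']
  · rw [← Real.rpow_add_one (abs_pos.2 ht).ne', sub_add, show (2 : ℝ) - 1 = 1 by norm_num]

-- The exponent is chosen so that Young's inequality bounds `|u| ^ (r - 1) * |u'|`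
-- by a multiple of `|u| ^ a + |u'| ^ p`.
lemma integrable_deriv_abs_rpow (hp : 1 < p) (ha : 0 < a) (hr : r = 1 + a * (p - 1) / p)
    (hu : Differentiable ℝ u) (hua : Integrable fun x => |u x| ^ a)
    (hup : Integrable fun x => |deriv u x| ^ p) :
    Integrable fun x => r * |u x| ^ (r - 2) * u x * deriv u x := by
  have hp1 : 0 < p - 1 := sub_pos.2 hp
  have hr1 : 1 < r := hr ▸ lt_add_of_pos_right 1
    (div_pos (mul_pos ha (sub_pos.2 hp)) (zero_lt_one.trans hp))
  have hconj : (p / (p - 1)).HolderConjugate p := (Real.HolderConjugate.conjExponent hp).symm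
  have hderiv : deriv (fun x => |u x| ^ r) = fun x => r * |u x| ^ (r - 2) * u x * deriv u x :=
    funext fun x => ((hasDerivAt_abs_rpow (u x) hr1).comp x (hu x).hasDerivAt).deriv
  refine (((hua.div_const (p / (p - 1))).add (hup.div_const p)).const_mul r).mono'
    (hderiv ▸ aestronglyMeasurable_deriv _ _) (Eventually.of_forall fun x => ?_)
  have hexp : (r - 1) * (p / (p - 1)) = a := by rw [hr]; field_simp; ring
  have hyoung := Real.young_inequality_of_nonneg (Real.rpow_nonneg (abs_nonneg (u x)) (r - 1))
    (abs_nonneg (deriv u x)) hconj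
  rw [← Real.rpow_mul (abs_nonneg _), hexp] at hyoung
  rw [norm_mul, Real.norm_eq_abs, Real.norm_eq_abs, abs_deriv_abs_rpow hr1, mul_assoc]
  exact mul_le_mul_of_nonneg_left hyoung (zero_lt_one.trans hr1).le

theorem tendsto_cocompact_zero_of_integrable_abs_rpow (hp : 1 < p) (ha : 0 < a)
    (hu : Differentiable ℝ u) (hua : Integrable fun x => |u x| ^ a)
    (hup : Integrable fun x => |deriv u x| ^ p) : Tendsto u (cocompact ℝ) (𝓝 0) := by
  obtain ⟨r, hr⟩ : ∃ r, r = 1 + a * (p - 1) / p := ⟨_, rfl⟩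
  have hr1 : 1 < r := hr ▸ lt_add_of_pos_right 1
    (div_pos (mul_pos ha (sub_pos.2 hp)) (zero_lt_one.trans hp))
  have hderiv : ∀ x, HasDerivAt (fun x => |u x| ^ r) (r * |u x| ^ (r - 2) * u x * deriv u x) x :=
    fun x => (hasDerivAt_abs_rpow (u x) hr1).comp x (hu x).hasDerivAt
  have hint := integrable_deriv_abs_rpow hp ha hr hu hua hup
  rw [cocompact_eq_atBot_atTop]
  refine Tendsto.sup ?_ ?_
  · refine tendsto_zero_of_integrable_abs_rpow_of_tendsto_abs_rpow (fun s hs => ?_) ha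
      (zero_lt_one.trans hr1) hua (tendsto_limUnder_of_hasDerivAt_of_integrableOn_Iic (a := 0)
        (fun x _ => hderiv x) hint.integrableOn)
    obtain ⟨c, hc⟩ := mem_atBot_sets.1 hs
    exact measure_mono_top hc Real.volume_Iic
  · refine tendsto_zero_of_integrable_abs_rpow_of_tendsto_abs_rpow (fun s hs => ?_) ha
      (zero_lt_one.trans hr1) hua (tendsto_limUnder_of_hasDerivAt_of_integrableOn_Ioi (a := 0)
        (fun x _ => hderiv x) hint.integrableOn)
    obtain ⟨c, hc⟩ := mem_atTop_sets.1 hs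
    exact measure_mono_top hc Real.volume_Ici

lemma exists_forall_abs_le_of_tendsto_cocompact_zero (hu : Continuous u)
    (hlim : Tendsto u (cocompact ℝ) (𝓝 0)) (hne : u ≠ 0) :
    ∃ x₀, 0 < |u x₀| ∧ ∀ x, |u x| ≤ |u x₀| := by
  obtain ⟨y, hy⟩ := Function.ne_iff.1 hne
  obtain ⟨x₀, hx₀⟩ := hu.abs.exists_forall_ge' y
    (((tendsto_zero_iff_abs_tendsto_zero _).1 hlim).eventually_le_const (abs_pos.2 hy))
  exact ⟨x₀, (abs_pos.2 hy).trans_le (hx₀ y), hx₀⟩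

end Decay

section TransitionCost

variable {p : ℝ} {g u W : ℝ → ℝ}

lemma two_mul_abs_integral_le_integral_mul_abs_deriv (hg : Continuous g) (hg0 : ∀ t, 0 ≤ g t)
    (hu : Differentiable ℝ u) (hlim : Tendsto u (cocompact ℝ) (𝓝 0))
    (hint : Integrable fun x => g (u x) * deriv u x) (x₀ : ℝ) :
    2 * |∫ t in (0 : ℝ)..u x₀, g t| ≤ ∫ x, |deriv u x| * g (u x) := by
  rw [cocompact_eq_atBot_atTop, tendsto_sup] at hlim
  set Φ : ℝ → ℝ := fun s => ∫ t in (0 : ℝ)..s, g t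
  have hΦ0 : Φ 0 = 0 := intervalIntegral.integral_same
  have hΦ : ∀ s, HasDerivAt Φ (g s) s := fun s => (hg.integral_hasStrictDerivAt 0 s).hasDerivAt
  have hΦu : ∀ x, HasDerivAt (fun x => Φ (u x)) (g (u x) * deriv u x) x := fun x =>
    (hΦ (u x)).comp x (hu x).hasDerivAt
  have hcont : ContinuousAt (fun x => Φ (u x)) x₀ := (hΦu x₀).continuousAt
  have hleft : |Φ (u x₀)| ≤ ∫ x in Iic x₀, ‖g (u x) * deriv u x‖ := by
    have hftc := integral_Iic_of_hasDerivAt_of_tendsto hcont.continuousWithinAt (fun x _ => hΦu x)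
      hint.integrableOn ((hΦ 0).continuousAt.tendsto.comp hlim.1)
    rw [hΦ0, sub_zero] at hftc
    rw [← hftc]
    exact norm_integral_le_integral_norm (fun x => g (u x) * deriv u x)
  have hright : |Φ (u x₀)| ≤ ∫ x in Ioi x₀, ‖g (u x) * deriv u x‖ := by
    have hftc := integral_Ioi_of_hasDerivAt_of_tendsto hcont.continuousWithinAt (fun x _ => hΦu x)
      hint.integrableOn ((hΦ 0).continuousAt.tendsto.comp hlim.2)
    rw [hΦ0, zero_sub] at hftc
    rw [← abs_neg, ← hftc]
    exact norm_integral_le_integral_norm (fun x => g (u x) * deriv u x)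
  calc 2 * |Φ (u x₀)|
      ≤ (∫ x in Iic x₀, ‖g (u x) * deriv u x‖) + ∫ x in Ioi x₀, ‖g (u x) * deriv u x‖ := by
        linarith
    _ = ∫ x, ‖g (u x) * deriv u x‖ :=
        intervalIntegral.integral_Iic_add_Ioi hint.norm.integrableOn hint.norm.integrableOn
    _ = ∫ x, |deriv u x| * g (u x) := by
        simp only [norm_mul, Real.norm_eq_abs, abs_of_nonneg (hg0 _), mul_comm]

lemma memLp_ofReal_of_integrable_abs_rpow {f : ℝ → ℝ} (hp : 0 < p) (hf : Measurable f)
    (hint : Integrable fun x => |f x| ^ p) : MemLp f (ENNReal.ofReal p) := by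
  rw [← integrable_norm_rpow_iff hf.aestronglyMeasurable (by simpa using hp) ENNReal.ofReal_ne_top]
  simpa only [ENNReal.toReal_ofReal hp.le, Real.norm_eq_abs] using hint

theorem two_mul_abs_integral_rpow_le (hp : 1 < p) (hW : Continuous W) (hW0 : ∀ t, 0 ≤ W t)
    (hu : Differentiable ℝ u) (hlim : Tendsto u (cocompact ℝ) (𝓝 0))
    (hup : Integrable fun x => |deriv u x| ^ p) (hWu : Integrable fun x => W (u x)) (x₀ : ℝ) :
    2 * |∫ t in (0 : ℝ)..u x₀, W t ^ ((p - 1) / p)| ≤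
      (∫ x, |deriv u x| ^ p) ^ (1 / p) * (∫ x, W (u x)) ^ ((p - 1) / p) := by
  have hconj : p.HolderConjugate (p / (p - 1)) := Real.HolderConjugate.conjExponent hp
  set g : ℝ → ℝ := fun t => W t ^ ((p - 1) / p)
  have hg : Continuous g :=
    hW.rpow_const fun _ => Or.inr (div_nonneg (sub_pos.2 hp).le hconj.nonneg)
  have hg0 : ∀ t, 0 ≤ g t := fun t => Real.rpow_nonneg (hW0 t) _
  have hgW : ∀ t, g t ^ (p / (p - 1)) = W t := fun t => by
    simp only [g, ← inv_div p (p - 1), Real.rpow_inv_rpow (hW0 t) hconj.symm.ne_zero]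
  have hderiv_memLp : MemLp (deriv u) (ENNReal.ofReal p) :=
    memLp_ofReal_of_integrable_abs_rpow hconj.pos (measurable_deriv u) hup
  have hg_memLp : MemLp (fun x => g (u x)) (ENNReal.ofReal (p / (p - 1))) :=
    memLp_ofReal_of_integrable_abs_rpow hconj.symm.pos (hg.comp hu.continuous).measurable
      (by simpa only [abs_of_nonneg (hg0 _), hgW] using hWu)
  have hint : Integrable fun x => g (u x) * deriv u x :=
    have := hconj.symm.ennrealOfReal
    hg_memLp.integrable_mul hderiv_memLp
  have hholder := integral_mul_le_Lp_mul_Lq_of_nonneg hconj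
    (Eventually.of_forall fun x => abs_nonneg (deriv u x))
    (Eventually.of_forall fun x => hg0 (u x)) hderiv_memLp.norm hg_memLp
  simp only [hgW, one_div_div] at hholder
  exact (two_mul_abs_integral_le_integral_mul_abs_deriv hg hg0 hu hlim hint x₀).trans hholder

end TransitionCost

/-- The potential `W(t) = |t| ^ a - |t| ^ b` of the one-dimensional variational problem behind
Nagy's inequality, with `a = q + 1` and `b = m + 1`. For `a < b` it is nonnegative exactly on
`[-1, 1]`; truncating it at `0` outside keeps all its real powers continuous and nonnegative. -/
noncomputable def nagyPotential (a b t : ℝ) : ℝ := max (|t| ^ a - |t| ^ b) 0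

/-- The speed of the extremal `u` of Nagy's inequality: equality in Young's inequality
`|u'| * W(u) ^ ((p - 1) / p) ≤ |u'| ^ p / p + (p - 1) / p * W(u)` forces `|u'| = W(u) ^ (1 / p)`. -/
noncomputable def nagySpeed (p a b t : ℝ) : ℝ := nagyPotential a b t ^ (1 / p)

/-- The cost `∫₀¹ W ^ ((p - 1) / p)` of a monotone transition between `0` and `1`. -/
noncomputable def nagyAction (p a b : ℝ) : ℝ :=
  ∫ t in (0 : ℝ)..1, nagyPotential a b t ^ ((p - 1) / p)

/-- The number `(p - 1) * s + p`, which is the paper's `η₁` at `s = m + 1` and `η₂` at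
`s = q + 1`. -/
def nagyEta (p s : ℝ) : ℝ := (p - 1) * s + p

/-- The best constant in the power form
`(∫ |u| ^ b) ^ η₂ ≤ c * (∫ |u| ^ a) ^ η₁ * (∫ |u'| ^ p) ^ (b - a)` of Nagy's inequality. -/
noncomputable def nagyConst (p a b : ℝ) : ℝ :=
  ((p - 1) * (b - a) / nagyEta p b) ^ ((p - 1) * (b - a)) *
    (nagyEta p a / nagyEta p b) ^ nagyEta p a / (2 * nagyAction p a b) ^ (p * (b - a))

section Potential

open ProbabilityTheory (beta)

variable {p a b t : ℝ}

lemma nagyPotential_nonneg (a b t : ℝ) : 0 ≤ nagyPotential a b t := le_max_right _ _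

lemma continuous_nagyPotential (ha : 0 ≤ a) (hb : 0 ≤ b) : Continuous (nagyPotential a b) :=
  ((continuous_abs.rpow_const fun _ => Or.inr ha).sub
    (continuous_abs.rpow_const fun _ => Or.inr hb)).max continuous_const

lemma nagyPotential_neg (a b t : ℝ) : nagyPotential a b (-t) = nagyPotential a b t := by
  simp only [nagyPotential, abs_neg]

lemma nagyPotential_of_abs_le_one (ha : 0 < a) (hab : a < b) (ht : |t| ≤ 1) :
    nagyPotential a b t = |t| ^ a - |t| ^ b :=
  max_eq_left (sub_nonneg.2
    (Real.rpow_le_rpow_of_exponent_ge' (abs_nonneg t) ht ha.le hab.le))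

lemma nagyPotential_of_mem_Ioo (ha : 0 < a) (hab : a < b) (ht : t ∈ Ioo (0 : ℝ) 1) :
    nagyPotential a b t = t ^ a * (1 - t ^ (b - a)) := by
  have habs : |t| = t := abs_of_pos ht.1
  rw [nagyPotential_of_abs_le_one ha hab (habs.le.trans ht.2.le), habs, mul_sub, mul_one,
    ← Real.rpow_add ht.1, add_sub_cancel]

lemma nagyPotential_zero (ha : 0 < a) (hab : a < b) : nagyPotential a b 0 = 0 := by
  rw [nagyPotential_of_abs_le_one ha hab (by simp), abs_zero, Real.zero_rpow ha.ne',
    Real.zero_rpow (ha.trans hab).ne', sub_zero]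

lemma nagyPotential_one (a b : ℝ) : nagyPotential a b 1 = 0 := by
  simp [nagyPotential]

lemma one_sub_rpow_pos (hab : a < b) (ht : t ∈ Ioo (0 : ℝ) 1) : 0 < 1 - t ^ (b - a) :=
  sub_pos.2 (Real.rpow_lt_one ht.1.le ht.2 (sub_pos.2 hab))

lemma nagyPotential_pos (ha : 0 < a) (hab : a < b) (ht : t ∈ Ioo (0 : ℝ) 1) :
    0 < nagyPotential a b t := by
  rw [nagyPotential_of_mem_Ioo ha hab ht]
  exact mul_pos (Real.rpow_pos_of_pos ht.1 a) (one_sub_rpow_pos hab ht)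

lemma nagyEta_pos (hp : 1 < p) (ht : 0 ≤ t) : 0 < nagyEta p t :=
  add_pos_of_nonneg_of_pos (mul_nonneg (sub_pos.2 hp).le ht) (zero_lt_one.trans hp)

lemma sub_one_mul_sub_add_nagyEta (p a b : ℝ) :
    (p - 1) * (b - a) + nagyEta p a = nagyEta p b := by
  simp only [nagyEta]
  ring

lemma sub_mul_nagyEta_div (hp : p ≠ 0) (hab : a < b) :
    (b - a) * (nagyEta p a / (p * (b - a))) - 1 = a * ((p - 1) / p) := by
  have hn : b - a ≠ 0 := (sub_pos.2 hab).ne'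
  simp only [nagyEta]
  field_simp
  ring

lemma nagyPotential_rpow (ha : 0 < a) (hab : a < b) (hp : p ≠ 0) (ht : t ∈ Ioo (0 : ℝ) 1) :
    nagyPotential a b t ^ ((p - 1) / p) =
      t ^ ((b - a) * (nagyEta p a / (p * (b - a))) - 1) *
        (1 - t ^ (b - a)) ^ ((p - 1) / p + 1 - 1) := by
  rw [nagyPotential_of_mem_Ioo ha hab ht,
    Real.mul_rpow (Real.rpow_nonneg ht.1.le a) (one_sub_rpow_pos hab ht).le,
    ← Real.rpow_mul ht.1.le, sub_mul_nagyEta_div hp hab, add_sub_cancel_right]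

lemma abs_rpow_div_nagySpeed (ha : 0 < a) (hab : a < b) (hp : p ≠ 0)
    (ht : t ∈ Ioo (0 : ℝ) 1) :
    |t| ^ a / nagySpeed p a b t =
      t ^ ((b - a) * (nagyEta p a / (p * (b - a))) - 1) *
        (1 - t ^ (b - a)) ^ ((p - 1) / p - 1) := by
  have hexp : (p - 1) / p - 1 = -(1 / p) := by field_simp; ring
  have ha_exp : a * ((p - 1) / p) = a - a * (1 / p) := by field_simp
  rw [nagySpeed, nagyPotential_of_mem_Ioo ha hab ht,
    Real.mul_rpow (Real.rpow_nonneg ht.1.le a) (one_sub_rpow_pos hab ht).le,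
    ← Real.rpow_mul ht.1.le, sub_mul_nagyEta_div hp hab, abs_of_pos ht.1, hexp,
    Real.rpow_neg (one_sub_rpow_pos hab ht).le, ha_exp,
    Real.rpow_sub ht.1 a (a * (1 / p)), ← div_div, div_eq_mul_inv]

lemma nagyEta_div_pos (hp : 1 < p) (ha : 0 < a) (hab : a < b) :
    0 < nagyEta p a / (p * (b - a)) :=
  div_pos (nagyEta_pos hp ha.le) (mul_pos (zero_lt_one.trans hp) (sub_pos.2 hab))

lemma sub_one_div_self_pos (hp : 1 < p) : 0 < (p - 1) / p :=
  div_pos (sub_pos.2 hp) (zero_lt_one.trans hp)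

lemma integrableOn_abs_rpow_div_nagySpeed (hp : 1 < p) (ha : 0 < a) (hab : a < b) :
    IntegrableOn (fun t => |t| ^ a / nagySpeed p a b t) (Ioo 0 1) :=
  (integrableOn_rpow_mul_one_sub_rpow (sub_pos.2 hab) (nagyEta_div_pos hp ha hab)
    (sub_one_div_self_pos hp)).congr_fun
    (fun _ ht => (abs_rpow_div_nagySpeed ha hab (zero_lt_one.trans hp).ne' ht).symm)
    measurableSet_Ioo

lemma setIntegral_abs_rpow_div_nagySpeed (hp : 1 < p) (ha : 0 < a) (hab : a < b) :
    ∫ t in Ioo (0 : ℝ) 1, |t| ^ a / nagySpeed p a b t =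
      beta (nagyEta p a / (p * (b - a))) ((p - 1) / p) / (b - a) := by
  rw [setIntegral_congr_fun measurableSet_Ioo fun _ ht =>
      abs_rpow_div_nagySpeed ha hab (zero_lt_one.trans hp).ne' ht,
    setIntegral_rpow_mul_one_sub_rpow (sub_pos.2 hab) (nagyEta_div_pos hp ha hab)
      (sub_one_div_self_pos hp)]

lemma nagyAction_eq_setIntegral (p a b : ℝ) :
    nagyAction p a b = ∫ t in Ioo (0 : ℝ) 1, nagyPotential a b t ^ ((p - 1) / p) := by
  rw [nagyAction, intervalIntegral.integral_of_le zero_le_one, integral_Ioc_eq_integral_Ioo]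

lemma nagyAction_eq_beta (hp : 1 < p) (ha : 0 < a) (hab : a < b) :
    nagyAction p a b = beta (nagyEta p a / (p * (b - a))) ((p - 1) / p + 1) / (b - a) := by
  rw [nagyAction_eq_setIntegral, setIntegral_congr_fun measurableSet_Ioo fun _ ht =>
      nagyPotential_rpow ha hab (zero_lt_one.trans hp).ne' ht,
    setIntegral_rpow_mul_one_sub_rpow (sub_pos.2 hab) (nagyEta_div_pos hp ha hab)
      (add_pos (sub_one_div_self_pos hp) zero_lt_one)]

lemma nagyAction_pos (hp : 1 < p) (ha : 0 < a) (hab : a < b) : 0 < nagyAction p a b := by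
  rw [nagyAction_eq_beta hp ha hab]
  exact div_pos (ProbabilityTheory.beta_pos (nagyEta_div_pos hp ha hab)
    (add_pos (sub_one_div_self_pos hp) zero_lt_one)) (sub_pos.2 hab)

-- This is the Pohozaev identity of the extremal; here it is the recurrence of the Beta function.
lemma nagyEta_mul_nagyAction (hp : 1 < p) (ha : 0 < a) (hab : a < b) :
    nagyEta p b * nagyAction p a b =
      (p - 1) * (b - a) * ∫ t in Ioo (0 : ℝ) 1, |t| ^ a / nagySpeed p a b t := by
  have hp0 : p ≠ 0 := (zero_lt_one.trans hp).ne'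
  have hn : b - a ≠ 0 := (sub_pos.2 hab).ne'
  have hrec := add_mul_beta_add_one_right (nagyEta_div_pos hp ha hab) (sub_one_div_self_pos hp)
  have hsum : nagyEta p a / (p * (b - a)) + (p - 1) / p = nagyEta p b / (p * (b - a)) := by
    rw [← sub_one_mul_sub_add_nagyEta p a b]
    field_simp
    ring
  rw [hsum] at hrec
  rw [setIntegral_abs_rpow_div_nagySpeed hp ha hab, nagyAction_eq_beta hp ha hab]
  field_simp at hrec ⊢
  linear_combination hrec

end Potential

section PowerForm

variable {p a b : ℝ} {u : ℝ → ℝ}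

lemma integrable_abs_rpow_of_abs_le_one (ha : 0 ≤ a) (hab : a ≤ b) (hu : Continuous u)
    (hu1 : ∀ x, |u x| ≤ 1) (hua : Integrable fun x => |u x| ^ a) :
    Integrable fun x => |u x| ^ b := by
  refine hua.mono' (hu.abs.rpow_const fun _ => Or.inr (ha.trans hab)).aestronglyMeasurable
    (Eventually.of_forall fun x => ?_)
  rw [Real.norm_of_nonneg (Real.rpow_nonneg (abs_nonneg _) _)]
  exact Real.rpow_le_rpow_of_exponent_ge' (abs_nonneg _) (hu1 x) ha hab

lemma integral_abs_rpow_nonneg (f : ℝ → ℝ) (s : ℝ) : 0 ≤ ∫ x, |f x| ^ s :=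
  integral_nonneg fun _ => Real.rpow_nonneg (abs_nonneg _) _

lemma abs_integral_nagyPotential_rpow_of_abs_eq_one (hp : 1 < p) (ha : 0 < a) (hab : a < b) {s : ℝ}
    (hs : |s| = 1) :
    |∫ t in (0 : ℝ)..s, nagyPotential a b t ^ ((p - 1) / p)| = nagyAction p a b := by
  rcases eq_or_eq_neg_of_abs_eq hs with rfl | rfl
  · exact abs_of_pos (nagyAction_pos hp ha hab)
  · have hodd := intervalIntegral.integral_comp_neg (a := 0) (b := 1)
      fun t => nagyPotential a b t ^ ((p - 1) / p)
    simp only [nagyPotential_neg, neg_zero] at hodd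
    rw [intervalIntegral.integral_symm, ← hodd, abs_neg]
    exact abs_of_pos (nagyAction_pos hp ha hab)

lemma two_mul_nagyAction_rpow_le (hp : 1 < p) (ha : 0 < a) (hab : a < b) (hu : Differentiable ℝ u)
    (hua : Integrable fun x => |u x| ^ a) (hup : Integrable fun x => |deriv u x| ^ p)
    (hu1 : ∀ x, |u x| ≤ 1) {x₀ : ℝ} (hx₀ : |u x₀| = 1) :
    0 ≤ (∫ x, |u x| ^ a) - ∫ x, |u x| ^ b ∧ (2 * nagyAction p a b) ^ p ≤
      (∫ x, |deriv u x| ^ p) * ((∫ x, |u x| ^ a) - ∫ x, |u x| ^ b) ^ (p - 1) := by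
  have hp0 : 0 < p := zero_lt_one.trans hp
  have hub := integrable_abs_rpow_of_abs_le_one ha.le hab.le hu.continuous hu1 hua
  have hWu : ∀ x, |u x| ^ a - |u x| ^ b = nagyPotential a b (u x) := fun x =>
    (nagyPotential_of_abs_le_one ha hab (hu1 x)).symm
  have hWu_int : Integrable fun x => nagyPotential a b (u x) :=
    (hua.sub hub).congr (Eventually.of_forall hWu)
  have hX0 : 0 ≤ ∫ x, nagyPotential a b (u x) := integral_nonneg fun _ => nagyPotential_nonneg _ _ _
  have hcost := two_mul_abs_integral_rpow_le hp (continuous_nagyPotential ha.le (ha.trans hab).le)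
    (nagyPotential_nonneg a b) hu (tendsto_cocompact_zero_of_integrable_abs_rpow hp ha hu hua hup)
    hup hWu_int x₀
  rw [abs_integral_nagyPotential_rpow_of_abs_eq_one hp ha hab hx₀] at hcost
  have hpow := Real.rpow_le_rpow (mul_nonneg zero_le_two (nagyAction_pos hp ha hab).le) hcost hp0.le
  rw [Real.mul_rpow (Real.rpow_nonneg (integral_abs_rpow_nonneg _ _) _) (Real.rpow_nonneg hX0 _),
    ← Real.rpow_mul (integral_abs_rpow_nonneg _ _), ← Real.rpow_mul hX0,
    one_div_mul_cancel hp0.ne', Real.rpow_one, div_mul_cancel₀ _ hp0.ne'] at hpow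
  rw [← integral_sub hua hub]
  simp only [hWu]
  exact ⟨hX0, hpow⟩

lemma rpow_mul_rpow_le_mul_add_rpow {x y α β : ℝ} (hx : 0 ≤ x) (hy : 0 ≤ y) (hα : 0 < α)
    (hβ : 0 < β) :
    x ^ α * y ^ β ≤ (α / (α + β)) ^ α * (β / (α + β)) ^ β * (x + y) ^ (α + β) := by
  have hs : 0 < α + β := add_pos hα hβ
  have hwα : 0 < α / (α + β) := div_pos hα hs
  have hwβ : 0 < β / (α + β) := div_pos hβ hs
  have hx' : 0 ≤ x / (α / (α + β)) := div_nonneg hx hwα.le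
  have hy' : 0 ≤ y / (β / (α + β)) := div_nonneg hy hwβ.le
  have hmean := Real.geom_mean_le_arith_mean2_weighted hwα.le hwβ.le hx' hy'
    (by rw [← add_div, div_self hs.ne'])
  rw [mul_div_cancel₀ _ hwα.ne', mul_div_cancel₀ _ hwβ.ne'] at hmean
  have hpow := Real.rpow_le_rpow
    (mul_nonneg (Real.rpow_nonneg hx' _) (Real.rpow_nonneg hy' _)) hmean hs.le
  rw [Real.mul_rpow (Real.rpow_nonneg hx' _) (Real.rpow_nonneg hy' _), ← Real.rpow_mul hx',
    ← Real.rpow_mul hy', div_mul_cancel₀ _ hs.ne', div_mul_cancel₀ _ hs.ne',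
    Real.div_rpow hx hwα.le, Real.div_rpow hy hwβ.le, div_mul_div_comm,
    div_le_iff₀' (by positivity)] at hpow
  exact hpow

lemma integral_abs_rpow_rpow_le_of_abs_le_one (hp : 1 < p) (ha : 0 < a) (hab : a < b)
    (hu : Differentiable ℝ u) (hua : Integrable fun x => |u x| ^ a)
    (hup : Integrable fun x => |deriv u x| ^ p) (hu1 : ∀ x, |u x| ≤ 1) {x₀ : ℝ}
    (hx₀ : |u x₀| = 1) :
    (∫ x, |u x| ^ b) ^ nagyEta p a ≤ nagyConst p a b * (∫ x, |u x| ^ a) ^ nagyEta p b *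
      (∫ x, |deriv u x| ^ p) ^ (b - a) := by
  have hba : 0 < b - a := sub_pos.2 hab
  have hD0 : 0 ≤ ∫ x, |deriv u x| ^ p := integral_abs_rpow_nonneg _ _
  have hB0 : 0 ≤ ∫ x, |u x| ^ b := integral_abs_rpow_nonneg _ _
  have hK : 0 < 2 * nagyAction p a b := mul_pos two_pos (nagyAction_pos hp ha hab)
  obtain ⟨hX0, hcost⟩ := two_mul_nagyAction_rpow_le hp ha hab hu hua hup hu1 hx₀
  set X := (∫ x, |u x| ^ a) - ∫ x, |u x| ^ b with hX
  have hcost_rpow : (2 * nagyAction p a b) ^ (p * (b - a)) ≤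
      (∫ x, |deriv u x| ^ p) ^ (b - a) * X ^ ((p - 1) * (b - a)) := by
    rw [Real.rpow_mul hK.le, Real.rpow_mul hX0, ← Real.mul_rpow hD0 (Real.rpow_nonneg hX0 _)]
    exact Real.rpow_le_rpow (Real.rpow_nonneg hK.le _) hcost hba.le
  have hmean := rpow_mul_rpow_le_mul_add_rpow hX0 hB0 (mul_pos (sub_pos.2 hp) hba)
    (nagyEta_pos hp ha.le)
  rw [sub_one_mul_sub_add_nagyEta, hX, sub_add_cancel, ← hX] at hmean
  rw [nagyConst, div_mul_eq_mul_div, div_mul_eq_mul_div, le_div_iff₀' (Real.rpow_pos_of_pos hK _)]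
  calc (2 * nagyAction p a b) ^ (p * (b - a)) * (∫ x, |u x| ^ b) ^ nagyEta p a
      ≤ (∫ x, |deriv u x| ^ p) ^ (b - a) * X ^ ((p - 1) * (b - a)) *
          (∫ x, |u x| ^ b) ^ nagyEta p a :=
        mul_le_mul_of_nonneg_right hcost_rpow (Real.rpow_nonneg hB0 _)
    _ = X ^ ((p - 1) * (b - a)) * (∫ x, |u x| ^ b) ^ nagyEta p a *
          (∫ x, |deriv u x| ^ p) ^ (b - a) := by ring
    _ ≤ _ := mul_le_mul_of_nonneg_right hmean (Real.rpow_nonneg hD0 _)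

lemma abs_const_mul_rpow (c s : ℝ) (f : ℝ → ℝ) :
    (fun x => |c * f x| ^ s) = fun x => |c| ^ s * |f x| ^ s :=
  funext fun x => by rw [abs_mul, Real.mul_rpow (abs_nonneg c) (abs_nonneg _)]

lemma mul_nagyEta_eq (p a b : ℝ) : b * nagyEta p a = a * nagyEta p b + p * (b - a) := by
  simp only [nagyEta]
  ring

lemma rpow_mul_rpow_le_of_homogeneous {M c A B D : ℝ} (hM : 0 < M) (hA : 0 ≤ A) (hB : 0 ≤ B)
    (hD : 0 ≤ D) (h : B ^ nagyEta p a ≤ c * A ^ nagyEta p b * D ^ (b - a)) :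
    (M ^ b * B) ^ nagyEta p a ≤ c * (M ^ a * A) ^ nagyEta p b * (M ^ p * D) ^ (b - a) := by
  calc (M ^ b * B) ^ nagyEta p a
      = M ^ (b * nagyEta p a) * B ^ nagyEta p a := by
        rw [Real.mul_rpow (by positivity) hB, ← Real.rpow_mul hM.le]
    _ ≤ M ^ (b * nagyEta p a) * (c * A ^ nagyEta p b * D ^ (b - a)) := by gcongr
    _ = c * (M ^ a * A) ^ nagyEta p b * (M ^ p * D) ^ (b - a) := by
        rw [mul_nagyEta_eq, Real.rpow_add hM, Real.mul_rpow (by positivity) hA,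
          Real.mul_rpow (by positivity) hD, ← Real.rpow_mul hM.le, ← Real.rpow_mul hM.le]
        ring

theorem integral_abs_rpow_rpow_le (hp : 1 < p) (ha : 0 < a) (hab : a < b)
    (hu : Differentiable ℝ u) (hua : Integrable fun x => |u x| ^ a)
    (hup : Integrable fun x => |deriv u x| ^ p) :
    (∫ x, |u x| ^ b) ^ nagyEta p a ≤ nagyConst p a b * (∫ x, |u x| ^ a) ^ nagyEta p b *
      (∫ x, |deriv u x| ^ p) ^ (b - a) := by
  rcases eq_or_ne u 0 with rfl | hne
  · simp [Real.zero_rpow, ha.ne', (ha.trans hab).ne', (nagyEta_pos hp ha.le).ne',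
      (nagyEta_pos hp (ha.trans hab).le).ne']
  obtain ⟨x₀, hx₀, hmax⟩ := exists_forall_abs_le_of_tendsto_cocompact_zero hu.continuous
    (tendsto_cocompact_zero_of_integrable_abs_rpow hp ha hu hua hup) hne
  obtain ⟨M, hM⟩ : ∃ M, |u x₀| = M := ⟨_, rfl⟩
  rw [hM] at hx₀ hmax
  have hMpow : ∀ s : ℝ, |M| ^ s ≠ 0 := fun s => by rw [abs_of_pos hx₀]; positivity
  obtain ⟨v, rfl⟩ : ∃ v : ℝ → ℝ, u = fun x => M * v x :=
    ⟨fun x => M⁻¹ * u x, funext fun x => (mul_inv_cancel_left₀ hx₀.ne' _).symm⟩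
  have hv : Differentiable ℝ v := by
    simpa only [inv_mul_cancel_left₀ hx₀.ne'] using hu.const_mul M⁻¹
  simp only [deriv_const_mul_field, abs_const_mul_rpow, integral_const_mul,
    integrable_const_mul_iff (hMpow _).isUnit] at hua hup ⊢
  rw [abs_of_pos hx₀]
  simp only [abs_mul, abs_of_pos hx₀, mul_le_iff_le_one_right hx₀, mul_eq_left₀ hx₀.ne'] at hM hmax
  exact rpow_mul_rpow_le_of_homogeneous hx₀ (integral_abs_rpow_nonneg _ _)
    (integral_abs_rpow_nonneg _ _) (integral_abs_rpow_nonneg _ _)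
    (integral_abs_rpow_rpow_le_of_abs_le_one hp ha hab hv hua hup hmax hM)

end PowerForm

section RootForm

variable {p a b : ℝ}

lemma nagyConst_pos (hp : 1 < p) (ha : 0 < a) (hab : a < b) : 0 < nagyConst p a b := by
  have hηb : 0 < nagyEta p b := nagyEta_pos hp (ha.trans hab).le
  exact div_pos (mul_pos
    (Real.rpow_pos_of_pos (div_pos (mul_pos (sub_pos.2 hp) (sub_pos.2 hab)) hηb) _)
    (Real.rpow_pos_of_pos (div_pos (nagyEta_pos hp ha.le) hηb) _))
    (Real.rpow_pos_of_pos (mul_pos two_pos (nagyAction_pos hp ha hab)) _)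

lemma nagyConst_eq_rpow (hp : 1 < p) (ha : 0 < a) (hab : a < b) :
    nagyConst p a b = (2 ^ p * (p - 1) ^ (1 - p) * nagyEta p b ^ (nagyEta p b / (b - a)) *
      (b - a) ^ (1 - 2 * p) * nagyEta p a ^ (-(nagyEta p a / (b - a))) *
      ((b - a) * nagyAction p a b) ^ p) ^ (-(b - a)) := by
  have hp1 : 0 < p - 1 := sub_pos.2 hp
  have hn : 0 < b - a := sub_pos.2 hab
  have hηa : 0 < nagyEta p a := nagyEta_pos hp ha.le
  have hηb : 0 < nagyEta p b := nagyEta_pos hp (ha.trans hab).le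
  have hK : 0 < nagyAction p a b := nagyAction_pos hp ha hab
  have hsum := sub_one_mul_sub_add_nagyEta p a b
  refine Real.log_injOn_pos (nagyConst_pos hp ha hab) (mem_Ioi.2 (by positivity)) ?_
  rw [nagyConst]
  simp (disch := positivity) only [Real.log_mul, Real.log_div, Real.log_rpow]
  field_simp
  linear_combination (-(Real.log (nagyEta p b))) * hsum

lemma setIntegral_beta_integrand_eq_mul_nagyAction (hp : 1 < p) (ha : 0 < a) (hab : a < b) :
    ∫ t in Ioo (0 : ℝ) 1,
      t ^ (nagyEta p a / (p * (b - a)) - 1) * (1 - t) ^ ((2 * p - 1) / p - 1) =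
      (b - a) * nagyAction p a b := by
  have hp0 : p ≠ 0 := (zero_lt_one.trans hp).ne'
  have hexp : (2 * p - 1) / p = (p - 1) / p + 1 := by field_simp; ring
  rw [hexp, setIntegral_beta_integrand (nagyEta_div_pos hp ha hab)
    (add_pos (sub_one_div_self_pos hp) zero_lt_one), nagyAction_eq_beta hp ha hab,
    mul_div_cancel₀ _ (sub_pos.2 hab).ne']

lemma rpow_nagyEta_rpow_root (hp : 1 < p) (ha : 0 < a) {B : ℝ} (hB : 0 ≤ B) :
    (B ^ nagyEta p a) ^ (1 / (b * nagyEta p a)) = B ^ (1 / b) := by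
  have hηa : nagyEta p a ≠ 0 := (nagyEta_pos hp ha.le).ne'
  rw [← Real.rpow_mul hB, mul_one_div, div_mul_cancel_right₀ hηa, one_div]

lemma mul_rpow_nagyEta_mul_rpow_root (hp : 1 < p) (ha : 0 < a) (hab : a < b) {A D θ : ℝ}
    (hA : 0 ≤ A) (hD : 0 ≤ D) (hθ : θ = p * (b - a) / (b * nagyEta p a)) :
    (nagyConst p a b * A ^ nagyEta p b * D ^ (b - a)) ^ (1 / (b * nagyEta p a)) =
      nagyConst p a b ^ (1 / (b * nagyEta p a)) * A ^ ((1 - θ) / a) * D ^ (θ / p) := by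
  have hp0 : p ≠ 0 := (zero_lt_one.trans hp).ne'
  have hb0 : b ≠ 0 := (ha.trans hab).ne'
  have hηa : nagyEta p a ≠ 0 := (nagyEta_pos hp ha.le).ne'
  have hc := (nagyConst_pos hp ha hab).le
  have hA_exp : nagyEta p b * (1 / (b * nagyEta p a)) = (1 - θ) / a := by
    rw [hθ, eq_div_iff ha.ne']
    field_simp
    linear_combination -mul_nagyEta_eq p a b
  have hD_exp : (b - a) * (1 / (b * nagyEta p a)) = θ / p := by
    rw [hθ]
    field_simp
  rw [Real.mul_rpow (by positivity) (by positivity), Real.mul_rpow hc (by positivity),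
    ← Real.rpow_mul hA, ← Real.rpow_mul hD, hA_exp, hD_exp]

end RootForm

/-- `G` is an admissible speed for a descent from height `1` to height `0` along `y' = -G(y)`: on
`[0, 1]` it vanishes exactly at the two ends, and the descent from `1` reaches every level in
`(0, 1)` in finite time. -/
structure IsDescentSpeed (G : ℝ → ℝ) : Prop where
  continuous : Continuous G
  map_zero : G 0 = 0
  map_one : G 1 = 0
  pos : ∀ s ∈ Ioo (0 : ℝ) 1, 0 < G s
  intervalIntegrable_inv : ∀ s ∈ Ioo (0 : ℝ) 1, IntervalIntegrable (fun t => (G t)⁻¹) volume s 1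

/-- The time a point moving with `y' = -G(y)` takes to descend from `1` to `s`. -/
noncomputable def descentTime (G : ℝ → ℝ) (s : ℝ) : ℝ := ∫ t in s..1, (G t)⁻¹

/-- The height at time `x` of the descent that leaves `1` at time `0`, that is, the generalized
inverse of `descentTime G`. It is `1` for `x ≤ 0`, and `sSup ∅ = 0` makes it `0` after a descent
that reaches `0` in finite time. -/
noncomputable def descentProfile (G : ℝ → ℝ) (x : ℝ) : ℝ :=
  sSup {s ∈ Ioc (0 : ℝ) 1 | x ≤ descentTime G s}

section Descent

variable {G : ℝ → ℝ} {s x : ℝ}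

lemma descentTime_one (G : ℝ → ℝ) : descentTime G 1 = 0 := intervalIntegral.integral_same

lemma hasDerivAt_descentTime (hG : IsDescentSpeed G) (hs : s ∈ Ioo (0 : ℝ) 1) :
    HasDerivAt (descentTime G) (-(G s)⁻¹) s :=
  intervalIntegral.integral_hasDerivAt_left (hG.intervalIntegrable_inv s hs)
    hG.continuous.measurable.inv.stronglyMeasurable.stronglyMeasurableAtFilter
    (hG.continuous.continuousAt.inv₀ (hG.pos s hs).ne')

lemma continuousOn_descentTime (hG : IsDescentSpeed G) :
    ContinuousOn (descentTime G) (Ioc 0 1) := by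
  intro s hs
  rcases hs.2.eq_or_lt with rfl | hs1
  · have hhalf : (1 / 2 : ℝ) < 1 := by norm_num
    have hint := hG.intervalIntegrable_inv (1 / 2) ⟨by norm_num, hhalf⟩
    have hcont := intervalIntegral.continuousOn_primitive_interval_left
      (uIcc_of_le hhalf.le ▸ (intervalIntegrable_iff_integrableOn_Icc_of_le hhalf.le).1 hint)
    rw [uIcc_of_le hhalf.le] at hcont
    exact (hcont 1 (right_mem_Icc.2 hhalf.le)).mono_of_mem_nhdsWithin
      (mem_nhdsWithin.2 ⟨Ioi (1 / 2), isOpen_Ioi, hhalf, fun t ht => ⟨le_of_lt ht.1, ht.2.2⟩⟩)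
  · exact (hasDerivAt_descentTime hG ⟨hs.1, hs1⟩).continuousAt.continuousWithinAt

lemma strictAntiOn_descentTime (hG : IsDescentSpeed G) :
    StrictAntiOn (descentTime G) (Ioc 0 1) := by
  refine strictAntiOn_of_deriv_neg (convex_Ioc 0 1) (continuousOn_descentTime hG) fun s hs => ?_
  rw [interior_Ioc] at hs
  rw [(hasDerivAt_descentTime hG hs).deriv]
  exact neg_neg_of_pos (inv_pos.2 (hG.pos s hs))

lemma descentTime_pos (hG : IsDescentSpeed G) (hs : s ∈ Ioo (0 : ℝ) 1) : 0 < descentTime G s :=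
  descentTime_one G ▸ strictAntiOn_descentTime hG ⟨hs.1, hs.2.le⟩ ⟨one_pos, le_rfl⟩ hs.2

lemma descentProfile_nonneg (G : ℝ → ℝ) (x : ℝ) : 0 ≤ descentProfile G x :=
  Real.sSup_nonneg fun _ hs => hs.1.1.le

lemma descentProfile_le_one (G : ℝ → ℝ) (x : ℝ) : descentProfile G x ≤ 1 :=
  Real.sSup_le (fun _ hs => hs.1.2) zero_le_one

lemma bddAbove_setOf_le_descentTime (G : ℝ → ℝ) (x : ℝ) :
    BddAbove {s ∈ Ioc (0 : ℝ) 1 | x ≤ descentTime G s} :=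
  ⟨1, fun _ hs => hs.1.2⟩

lemma le_descentProfile_iff (hG : IsDescentSpeed G) (hs : s ∈ Ioc (0 : ℝ) 1) :
    s ≤ descentProfile G x ↔ x ≤ descentTime G s := by
  refine ⟨fun hle => ?_, fun hle => le_csSup (bddAbove_setOf_le_descentTime G x) ⟨hs, hle⟩⟩
  by_contra! hlt
  have hcont : ContinuousWithinAt (descentTime G) (Iio s) s :=
    (continuousOn_descentTime hG s hs).mono_of_mem_nhdsWithin
      (mem_of_superset (Ioo_mem_nhdsLT hs.1) fun t ht => ⟨ht.1, ht.2.le.trans hs.2⟩)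
  obtain ⟨r, hr, hrx⟩ := Filter.nonempty_of_mem (inter_mem (Ioo_mem_nhdsLT hs.1)
    (hcont.eventually_lt_const hlt))
  refine (hle.trans (Real.sSup_le (fun t ht => ?_) hr.1.le)).not_gt hr.2
  exact ((strictAntiOn_descentTime hG).lt_iff_gt ⟨hr.1, hr.2.le.trans hs.2⟩ ht.1 |>.1
    (hrx.trans_le ht.2)).le

lemma lt_descentProfile_iff (hG : IsDescentSpeed G) (hs : s ∈ Ioo (0 : ℝ) 1) :
    s < descentProfile G x ↔ x < descentTime G s := by
  have hanti := strictAntiOn_descentTime hG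
  refine ⟨fun hlt => ?_, fun hlt => ?_⟩
  · obtain ⟨r, hsr, hr⟩ := exists_between hlt
    have hr' : r ∈ Ioc (0 : ℝ) 1 := ⟨hs.1.trans hsr, hr.le.trans (descentProfile_le_one G x)⟩
    exact ((le_descentProfile_iff hG hr').1 hr.le).trans_lt (hanti ⟨hs.1, hs.2.le⟩ hr' hsr)
  · obtain ⟨r, hr, hrx⟩ := Filter.nonempty_of_mem (inter_mem (Ioo_mem_nhdsGT hs.2)
      ((hasDerivAt_descentTime hG hs).continuousAt.continuousWithinAt.eventually_const_lt hlt))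
    exact hr.1.trans_le ((le_descentProfile_iff hG ⟨hs.1.trans hr.1, hr.2.le⟩).2 hrx.le)

lemma descentProfile_of_nonpos (hG : IsDescentSpeed G) (hx : x ≤ 0) : descentProfile G x = 1 :=
  (descentProfile_le_one G x).antisymm
    ((le_descentProfile_iff hG ⟨one_pos, le_rfl⟩).2 (descentTime_one G ▸ hx))

lemma descentProfile_lt_one (hG : IsDescentSpeed G) (hx : 0 < x) : descentProfile G x < 1 := by
  rw [← not_le, le_descentProfile_iff hG ⟨one_pos, le_rfl⟩, descentTime_one, not_le]
  exact hx

lemma descentProfile_descentTime (hG : IsDescentSpeed G) (hs : s ∈ Ioo (0 : ℝ) 1) :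
    descentProfile G (descentTime G s) = s :=
  le_antisymm (not_lt.1 ((lt_descentProfile_iff hG hs).not.2 (lt_irrefl _)))
    ((le_descentProfile_iff hG ⟨hs.1, hs.2.le⟩).2 le_rfl)

lemma descentTime_descentProfile (hG : IsDescentSpeed G) (hx : descentProfile G x ∈ Ioo (0 : ℝ) 1) :
    descentTime G (descentProfile G x) = x :=
  le_antisymm (not_lt.1 ((lt_descentProfile_iff hG hx).not.1 (lt_irrefl _)))
    ((le_descentProfile_iff hG ⟨hx.1, hx.2.le⟩).1 le_rfl)

lemma antitone_descentProfile (G : ℝ → ℝ) : Antitone (descentProfile G) :=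
  fun x _ hxy => Real.sSup_le (fun _ hs => le_csSup (bddAbove_setOf_le_descentTime G x)
    ⟨hs.1, hxy.trans hs.2⟩) (descentProfile_nonneg G x)

lemma continuous_descentProfile (hG : IsDescentSpeed G) : Continuous (descentProfile G) := by
  refine continuous_iff_continuousAt.2 fun x => tendsto_order.2 ⟨fun c hc => ?_, fun c hc => ?_⟩
  · rcases lt_or_ge c 0 with hc0 | hc0
    · exact Eventually.of_forall fun y => hc0.trans_le (descentProfile_nonneg G y)
    · obtain ⟨s, hcs, hs⟩ := exists_between hc
      have hs' : s ∈ Ioo (0 : ℝ) 1 :=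
        ⟨hc0.trans_lt hcs, hs.trans_le (descentProfile_le_one G x)⟩
      filter_upwards [eventually_lt_nhds ((lt_descentProfile_iff hG hs').1 hs)] with y hy
      exact hcs.trans ((lt_descentProfile_iff hG hs').2 hy)
  · rcases lt_or_ge 1 c with hc1 | hc1
    · exact Eventually.of_forall fun y => (descentProfile_le_one G y).trans_lt hc1
    · obtain ⟨s, hs, hsc⟩ := exists_between hc
      have hs' : s ∈ Ioc (0 : ℝ) 1 :=
        ⟨(descentProfile_nonneg G x).trans_lt hs, hsc.le.trans hc1⟩
      have hTs : descentTime G s < x := not_le.1 ((le_descentProfile_iff hG hs').not.1 hs.not_ge)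
      filter_upwards [eventually_gt_nhds hTs] with y hy
      exact (not_le.1 ((le_descentProfile_iff hG hs').not.2 hy.not_ge)).trans hsc

lemma hasDerivAt_descentProfile_of_mem_Ioo (hG : IsDescentSpeed G)
    (hx : descentProfile G x ∈ Ioo (0 : ℝ) 1) :
    HasDerivAt (descentProfile G) (-G (descentProfile G x)) x := by
  have hcont := (continuous_descentProfile hG).continuousAt (x := x)
  have hinv : ∀ᶠ y in 𝓝 x, descentTime G (descentProfile G y) = y := by
    filter_upwards [hcont.eventually (isOpen_Ioo.mem_nhds hx)] with y hy
    exact descentTime_descentProfile hG hy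
  simpa only [inv_neg, inv_inv] using HasDerivAt.of_local_left_inverse hcont
    (hasDerivAt_descentTime hG hx) (neg_ne_zero.2 (inv_ne_zero (hG.pos _ hx).ne')) hinv

lemma hasDerivAt_descentProfile_of_ne (hG : IsDescentSpeed G) (hx0 : x ≠ 0)
    (hxc : x ≠ sInf {y | descentProfile G y = 0}) :
    HasDerivAt (descentProfile G) (-G (descentProfile G x)) x := by
  have hlocal : ∀ c, G c = 0 → (∀ᶠ y in 𝓝 x, descentProfile G y = c) →
      HasDerivAt (descentProfile G) (-G (descentProfile G x)) x := fun c hc h => by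
    rw [h.self_of_nhds, hc, neg_zero]
    exact (hasDerivAt_const x c).congr_of_eventuallyEq h
  rcases hx0.lt_or_gt with hneg | hpos
  · exact hlocal 1 hG.map_one
      ((eventually_le_nhds hneg).mono fun y => descentProfile_of_nonpos hG)
  rcases (descentProfile_nonneg G x).eq_or_lt with hzero | hpos'
  · have hbdd : BddBelow {y | descentProfile G y = 0} := ⟨0, fun y hy => by
      by_contra! hy0
      exact one_ne_zero ((descentProfile_of_nonpos hG hy0.le).symm.trans hy)⟩
    obtain ⟨y, hy, hyx⟩ := exists_lt_of_csInf_lt ⟨x, hzero.symm⟩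
      ((csInf_le hbdd hzero.symm).lt_of_ne' hxc)
    exact hlocal 0 hG.map_zero ((eventually_ge_nhds hyx).mono fun z hz =>
      ((antitone_descentProfile G hz).trans_eq hy).antisymm (descentProfile_nonneg G z))
  · exact hasDerivAt_descentProfile_of_mem_Ioo hG ⟨hpos', descentProfile_lt_one hG hpos⟩

-- The two exceptional points are removed by integrating the continuous function `-G ∘ y`.
theorem hasDerivAt_descentProfile (hG : IsDescentSpeed G) (x : ℝ) :
    HasDerivAt (descentProfile G) (-G (descentProfile G x)) x := by
  have hcont := continuous_descentProfile hG
  have hderiv_cont : Continuous fun y => -G (descentProfile G y) := (hG.continuous.comp hcont).neg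
  have hftc : ∀ y, descentProfile G y =
      (∫ z in (0 : ℝ)..y, -G (descentProfile G z)) + descentProfile G 0 := fun y => by
    rw [integral_eq_of_hasDerivAt_off_countable (descentProfile G) _
      (s := {0, sInf {y | descentProfile G y = 0}}) (by simp) hcont.continuousOn
      (fun z hz => hasDerivAt_descentProfile_of_ne hG (not_or.1 hz.2).1 (not_or.1 hz.2).2)
      (hderiv_cont.intervalIntegrable _ _), sub_add_cancel]
  exact ((hderiv_cont.integral_hasStrictDerivAt 0 x).hasDerivAt.add_const _).congr_of_eventuallyEq
    (Eventually.of_forall hftc)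

end Descent

section EvenBump

variable {F G f : ℝ → ℝ}

lemma descentProfile_abs (hG : IsDescentSpeed G) (x : ℝ) :
    descentProfile G |x| = descentProfile G x + descentProfile G (-x) - 1 := by
  rcases le_total 0 x with hx | hx
  · rw [abs_of_nonneg hx, descentProfile_of_nonpos hG (neg_nonpos.2 hx), add_sub_cancel_right]
  · rw [abs_of_nonpos hx, descentProfile_of_nonpos hG hx, add_sub_cancel_left]

lemma hasDerivAt_descentProfile_abs (hG : IsDescentSpeed G) (x : ℝ) :
    HasDerivAt (fun x => descentProfile G |x|)
      (G (descentProfile G (-x)) - G (descentProfile G x)) x := by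
  have hneg := (hasDerivAt_descentProfile hG (-x)).comp x (hasDerivAt_neg x)
  have hsum := ((hasDerivAt_descentProfile hG x).add hneg).sub_const 1
  rw [funext (descentProfile_abs hG)]
  exact hsum.congr_deriv (by ring)

lemma contDiff_descentProfile_abs (hG : IsDescentSpeed G) :
    ContDiff ℝ 1 fun x => descentProfile G |x| := by
  have hcont : Continuous fun x => G (descentProfile G x) :=
    hG.continuous.comp (continuous_descentProfile hG)
  refine contDiff_one_iff_deriv.2
    ⟨fun x => (hasDerivAt_descentProfile_abs hG x).differentiableAt, ?_⟩
  rw [funext fun x => (hasDerivAt_descentProfile_abs hG x).deriv]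
  exact (hcont.comp continuous_neg).sub hcont

lemma abs_deriv_descentProfile_abs (hG : IsDescentSpeed G) (hG0 : ∀ t, 0 ≤ G t) (x : ℝ) :
    |deriv (fun x => descentProfile G |x|) x| = G (descentProfile G |x|) := by
  rw [(hasDerivAt_descentProfile_abs hG x).deriv]
  rcases le_total 0 x with hx | hx
  · rw [abs_of_nonneg hx, descentProfile_of_nonpos hG (neg_nonpos.2 hx), hG.map_one, zero_sub,
      abs_neg, abs_of_nonneg (hG0 _)]
  · rw [abs_of_nonpos hx, descentProfile_of_nonpos hG hx, hG.map_one, sub_zero,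
      abs_of_nonneg (hG0 _)]

lemma descentTime_image_subset_Ioi (hG : IsDescentSpeed G) :
    descentTime G '' Ioo 0 1 ⊆ Ioi 0 := by
  rintro _ ⟨s, hs, rfl⟩
  exact descentTime_pos hG hs

lemma descentProfile_eq_zero_of_notMem_image (hG : IsDescentSpeed G) {x : ℝ}
    (hx : x ∈ Ioi 0 \ descentTime G '' Ioo 0 1) : descentProfile G x = 0 := by
  by_contra hne
  have hmem : descentProfile G x ∈ Ioo (0 : ℝ) 1 :=
    ⟨(descentProfile_nonneg G x).lt_of_ne' hne, descentProfile_lt_one hG hx.1⟩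
  exact hx.2 ⟨_, hmem, descentTime_descentProfile hG hmem⟩

lemma injOn_descentTime (hG : IsDescentSpeed G) : InjOn (descentTime G) (Ioo 0 1) :=
  (strictAntiOn_descentTime hG).injOn.mono Ioo_subset_Ioc_self

lemma abs_deriv_descentTime_smul (hG : IsDescentSpeed G) (F : ℝ → ℝ) {s : ℝ}
    (hs : s ∈ Ioo (0 : ℝ) 1) :
    |-(G s)⁻¹| • F (descentProfile G (descentTime G s)) = F s / G s := by
  rw [abs_neg, abs_of_pos (inv_pos.2 (hG.pos s hs)), descentProfile_descentTime hG hs, smul_eq_mul,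
    inv_mul_eq_div]

lemma integrableOn_comp_descentProfile (hG : IsDescentSpeed G) (hF : F 0 = 0)
    (hFG : IntegrableOn (fun s => F s / G s) (Ioo 0 1)) :
    IntegrableOn (fun x => F (descentProfile G x)) (Ioi 0) := by
  refine IntegrableOn.of_forall_sdiff_eq_zero (s := descentTime G '' Ioo 0 1) ?_ measurableSet_Ioi
    fun x hx => by rw [descentProfile_eq_zero_of_notMem_image hG hx, hF]
  rw [integrableOn_image_iff_integrableOn_abs_deriv_smul measurableSet_Ioo
    (fun s hs => (hasDerivAt_descentTime hG hs).hasDerivWithinAt) (injOn_descentTime hG)]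
  exact hFG.congr_fun (fun s hs => (abs_deriv_descentTime_smul hG F hs).symm) measurableSet_Ioo

lemma setIntegral_comp_descentProfile (hG : IsDescentSpeed G) (hF : F 0 = 0) :
    ∫ x in Ioi (0 : ℝ), F (descentProfile G x) = ∫ s in Ioo (0 : ℝ) 1, F s / G s := by
  rw [setIntegral_eq_of_subset_of_forall_sdiff_eq_zero measurableSet_Ioi
      (descentTime_image_subset_Ioi hG)
      fun x hx => by rw [descentProfile_eq_zero_of_notMem_image hG hx, hF],
    integral_image_eq_integral_abs_deriv_smul measurableSet_Ioo
      (fun s hs => (hasDerivAt_descentTime hG hs).hasDerivWithinAt) (injOn_descentTime hG)]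
  exact setIntegral_congr_fun measurableSet_Ioo fun s hs => abs_deriv_descentTime_smul hG F hs

lemma integrable_comp_abs_of_integrableOn_Ioi (hf : IntegrableOn f (Ioi 0)) :
    Integrable fun x => f |x| := by
  have hneg : IntegrableOn (fun x => f (-x)) (Iio 0) :=
    IntegrableOn.comp_neg_Iio (by rwa [neg_zero])
  rw [← integrableOn_univ, ← Iio_union_Ici (a := (0 : ℝ)), integrableOn_union,
    integrableOn_Ici_iff_integrableOn_Ioi]
  exact ⟨hneg.congr_fun (fun x hx => by rw [abs_of_neg hx]) measurableSet_Iio,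
    hf.congr_fun (fun x hx => by rw [abs_of_pos hx]) measurableSet_Ioi⟩

lemma integrable_comp_descentProfile_abs (hG : IsDescentSpeed G) (hF : F 0 = 0)
    (hFG : IntegrableOn (fun s => F s / G s) (Ioo 0 1)) :
    Integrable fun x => F (descentProfile G |x|) :=
  integrable_comp_abs_of_integrableOn_Ioi (integrableOn_comp_descentProfile hG hF hFG)

lemma integral_comp_descentProfile_abs (hG : IsDescentSpeed G) (hF : F 0 = 0) :
    ∫ x, F (descentProfile G |x|) = 2 * ∫ s in Ioo (0 : ℝ) 1, F s / G s := by
  rw [integral_comp_abs (f := fun x => F (descentProfile G x)),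
    setIntegral_comp_descentProfile hG hF]

end EvenBump

/-- The even bump of height `1` that solves `u' = -W(u) ^ (1 / p)` on the positive half-line, an
extremal of Nagy's inequality. -/
noncomputable def nagyExtremal (p a b x : ℝ) : ℝ := descentProfile (nagySpeed p a b) |x|

section Extremal

variable {p a b t : ℝ}

lemma nagySpeed_nonneg (p a b t : ℝ) : 0 ≤ nagySpeed p a b t :=
  Real.rpow_nonneg (nagyPotential_nonneg a b t) _

lemma nagySpeed_pos (ha : 0 < a) (hab : a < b) (ht : t ∈ Ioo (0 : ℝ) 1) : 0 < nagySpeed p a b t :=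
  Real.rpow_pos_of_pos (nagyPotential_pos ha hab ht) _

lemma nagySpeed_rpow (hp : p ≠ 0) (a b t : ℝ) : nagySpeed p a b t ^ p = nagyPotential a b t := by
  rw [nagySpeed, one_div, Real.rpow_inv_rpow (nagyPotential_nonneg a b t) hp]

lemma continuous_nagySpeed (hp : 0 ≤ p) (ha : 0 ≤ a) (hb : 0 ≤ b) : Continuous (nagySpeed p a b) :=
  (continuous_nagyPotential ha hb).rpow_const fun _ => Or.inr (one_div_nonneg.2 hp)

lemma intervalIntegrable_inv_nagySpeed (hp : 1 < p) (ha : 0 < a) (hab : a < b)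
    (ht : t ∈ Ioo (0 : ℝ) 1) : IntervalIntegrable (fun s => (nagySpeed p a b s)⁻¹) volume t 1 := by
  rw [intervalIntegrable_iff_integrableOn_Ioo_of_le ht.2.le]
  have hcont : Continuous (nagySpeed p a b) :=
    continuous_nagySpeed (zero_lt_one.trans hp).le ha.le (ha.trans hab).le
  have hint : IntegrableOn (fun s => |s| ^ a / nagySpeed p a b s) (Ioo t 1) :=
    (integrableOn_abs_rpow_div_nagySpeed hp ha hab).mono_set (Ioo_subset_Ioo_left ht.1.le)
  refine (hint.const_mul (t ^ a)⁻¹).mono' hcont.measurable.inv.aestronglyMeasurable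
    ((ae_restrict_iff' measurableSet_Ioo).2 (Eventually.of_forall fun s hs => ?_))
  have hs0 : 0 < s := ht.1.trans hs.1
  have hle : 1 ≤ (t ^ a)⁻¹ * s ^ a := by
    rw [inv_mul_eq_div, one_le_div (Real.rpow_pos_of_pos ht.1 a)]
    exact Real.rpow_le_rpow ht.1.le hs.1.le ha.le
  rw [norm_inv, Real.norm_of_nonneg (nagySpeed_nonneg p a b s), abs_of_pos hs0, ← mul_div_assoc,
    inv_eq_one_div]
  exact div_le_div_of_nonneg_right hle (nagySpeed_nonneg p a b s)

lemma isDescentSpeed_nagySpeed (hp : 1 < p) (ha : 0 < a) (hab : a < b) :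
    IsDescentSpeed (nagySpeed p a b) where
  continuous := continuous_nagySpeed (zero_lt_one.trans hp).le ha.le (ha.trans hab).le
  map_zero := by
    rw [nagySpeed, nagyPotential_zero ha hab,
      Real.zero_rpow (one_div_ne_zero (zero_lt_one.trans hp).ne')]
  map_one := by
    rw [nagySpeed, nagyPotential_one, Real.zero_rpow (one_div_ne_zero (zero_lt_one.trans hp).ne')]
  pos _ hs := nagySpeed_pos ha hab hs
  intervalIntegrable_inv _ hs := intervalIntegrable_inv_nagySpeed hp ha hab hs

lemma nagyPotential_div_nagySpeed (hp : p ≠ 0) (ha : 0 < a) (hab : a < b)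
    (ht : t ∈ Ioo (0 : ℝ) 1) :
    nagyPotential a b t / nagySpeed p a b t = nagyPotential a b t ^ ((p - 1) / p) := by
  rw [sub_div, div_self hp, Real.rpow_sub (nagyPotential_pos ha hab ht), Real.rpow_one, nagySpeed]

lemma integrableOn_nagyPotential_div_nagySpeed (hp : 1 < p) (ha : 0 < a) (hab : a < b) :
    IntegrableOn (fun t => nagyPotential a b t / nagySpeed p a b t) (Ioo 0 1) := by
  have hcont : Continuous fun t => nagyPotential a b t ^ ((p - 1) / p) :=
    (continuous_nagyPotential ha.le (ha.trans hab).le).rpow_const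
      fun _ => Or.inr (sub_one_div_self_pos hp).le
  exact ((hcont.integrableOn_Icc).mono_set Ioo_subset_Icc_self).congr_fun
    (fun t ht => (nagyPotential_div_nagySpeed (zero_lt_one.trans hp).ne' ha hab ht).symm)
    measurableSet_Ioo

lemma contDiff_nagyExtremal (hp : 1 < p) (ha : 0 < a) (hab : a < b) :
    ContDiff ℝ 1 (nagyExtremal p a b) :=
  contDiff_descentProfile_abs (isDescentSpeed_nagySpeed hp ha hab)

lemma abs_nagyExtremal_le_one (p a b x : ℝ) : |nagyExtremal p a b x| ≤ 1 :=
  abs_le.2 ⟨neg_one_lt_zero.le.trans (descentProfile_nonneg _ _), descentProfile_le_one _ _⟩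

lemma integrable_abs_nagyExtremal_rpow (hp : 1 < p) (ha : 0 < a) (hab : a < b) :
    Integrable fun x => |nagyExtremal p a b x| ^ a :=
  integrable_comp_descentProfile_abs (F := fun t => |t| ^ a) (isDescentSpeed_nagySpeed hp ha hab)
    (by rw [abs_zero, Real.zero_rpow ha.ne']) (integrableOn_abs_rpow_div_nagySpeed hp ha hab)

lemma integral_abs_nagyExtremal_rpow (hp : 1 < p) (ha : 0 < a) (hab : a < b) :
    (p - 1) * (b - a) * ∫ x, |nagyExtremal p a b x| ^ a =
      nagyEta p b * (2 * nagyAction p a b) := by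
  rw [mul_left_comm, nagyEta_mul_nagyAction hp ha hab, mul_left_comm,
    ← integral_comp_descentProfile_abs (F := fun t => |t| ^ a)
      (isDescentSpeed_nagySpeed hp ha hab) (by rw [abs_zero, Real.zero_rpow ha.ne'])]
  rfl

lemma integrable_nagyPotential_nagyExtremal (hp : 1 < p) (ha : 0 < a) (hab : a < b) :
    Integrable fun x => nagyPotential a b (nagyExtremal p a b x) :=
  integrable_comp_descentProfile_abs (isDescentSpeed_nagySpeed hp ha hab)
    (nagyPotential_zero ha hab) (integrableOn_nagyPotential_div_nagySpeed hp ha hab)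

lemma integral_nagyPotential_nagyExtremal (hp : 1 < p) (ha : 0 < a) (hab : a < b) :
    ∫ x, nagyPotential a b (nagyExtremal p a b x) = 2 * nagyAction p a b := by
  rw [nagyAction_eq_setIntegral, ← setIntegral_congr_fun measurableSet_Ioo fun t ht =>
      nagyPotential_div_nagySpeed (zero_lt_one.trans hp).ne' ha hab ht]
  exact integral_comp_descentProfile_abs (isDescentSpeed_nagySpeed hp ha hab)
    (nagyPotential_zero ha hab)

lemma abs_deriv_nagyExtremal_rpow (hp : 1 < p) (ha : 0 < a) (hab : a < b) (x : ℝ) :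
    |deriv (nagyExtremal p a b) x| ^ p = nagyPotential a b (nagyExtremal p a b x) := by
  rw [← nagySpeed_rpow (zero_lt_one.trans hp).ne']
  exact congrArg (· ^ p) (abs_deriv_descentProfile_abs (isDescentSpeed_nagySpeed hp ha hab)
    (nagySpeed_nonneg p a b) x)

lemma integral_abs_rpow_sub_integral_abs_rpow_nagyExtremal (hp : 1 < p) (ha : 0 < a)
    (hab : a < b) :
    (∫ x, |nagyExtremal p a b x| ^ a) - ∫ x, |nagyExtremal p a b x| ^ b =
      2 * nagyAction p a b := by
  have hua := integrable_abs_nagyExtremal_rpow hp ha hab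
  have hub := integrable_abs_rpow_of_abs_le_one ha.le hab.le
    (contDiff_nagyExtremal hp ha hab).continuous (abs_nagyExtremal_le_one p a b) hua
  rw [← integral_sub hua hub, ← integral_nagyPotential_nagyExtremal hp ha hab]
  exact integral_congr_ae (Eventually.of_forall fun x =>
    (nagyPotential_of_abs_le_one ha hab (abs_nagyExtremal_le_one p a b x)).symm)

lemma integral_abs_nagyExtremal_rpow_pos (hp : 1 < p) (ha : 0 < a) (hab : a < b) :
    0 < ∫ x, |nagyExtremal p a b x| ^ a := by
  refine pos_of_mul_pos_right (a := (p - 1) * (b - a)) ?_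
    (mul_pos (sub_pos.2 hp) (sub_pos.2 hab)).le
  rw [integral_abs_nagyExtremal_rpow hp ha hab]
  exact mul_pos (nagyEta_pos hp (ha.trans hab).le) (mul_pos two_pos (nagyAction_pos hp ha hab))

theorem integral_abs_nagyExtremal_rpow_rpow_eq (hp : 1 < p) (ha : 0 < a) (hab : a < b) :
    (∫ x, |nagyExtremal p a b x| ^ b) ^ nagyEta p a =
      nagyConst p a b * (∫ x, |nagyExtremal p a b x| ^ a) ^ nagyEta p b *
        (2 * nagyAction p a b) ^ (b - a) := by
  have hB0 : 0 ≤ ∫ x, |nagyExtremal p a b x| ^ b := integral_abs_rpow_nonneg _ _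
  have hA0 := integral_abs_nagyExtremal_rpow_pos hp ha hab
  have hD0 : 0 < 2 * nagyAction p a b := mul_pos two_pos (nagyAction_pos hp ha hab)
  have hηb : nagyEta p b ≠ 0 := (nagyEta_pos hp (ha.trans hab).le).ne'
  have hsum := sub_one_mul_sub_add_nagyEta p a b
  have hA := integral_abs_nagyExtremal_rpow hp ha hab
  have hB := integral_abs_rpow_sub_integral_abs_rpow_nagyExtremal hp ha hab
  set A := ∫ x, |nagyExtremal p a b x| ^ a
  set B := ∫ x, |nagyExtremal p a b x| ^ b
  set D := 2 * nagyAction p a b with hD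
  have hDA : (p - 1) * (b - a) / nagyEta p b = D / A := by
    rw [div_eq_div_iff hηb hA0.ne', hA, mul_comm]
  have hBA : nagyEta p a / nagyEta p b = B / A := by
    rw [div_eq_div_iff hηb hA0.ne']
    linear_combination A * hsum - hA + nagyEta p b * hB
  have hexp : p * (b - a) = (p - 1) * (b - a) + (b - a) := by ring
  rw [nagyConst, ← hD, hDA, hBA, hexp, Real.div_rpow hD0.le hA0.le, Real.div_rpow hB0 hA0.le,
    Real.rpow_add hD0, ← hsum, Real.rpow_add hA0]
  field_simp

end Extremal

section Sharpness

variable {p a b θ : ℝ}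

lemma nagyConst_root_eq (hp : 1 < p) (ha : 0 < a) (hab : a < b) :
    nagyConst p a b ^ (1 / (b * nagyEta p a)) =
      (2 ^ p * (p - 1) ^ (1 - p) * nagyEta p b ^ (nagyEta p b / (b - a)) *
        (b - a) ^ (1 - 2 * p) * nagyEta p a ^ (-(nagyEta p a / (b - a))) *
        (∫ t in Ioo (0 : ℝ) 1, t ^ (nagyEta p a / (p * (b - a)) - 1) *
          (1 - t) ^ ((2 * p - 1) / p - 1)) ^ p) ^ (-((b - a) / (b * nagyEta p a))) := by
  have hηa : 0 < nagyEta p a := nagyEta_pos hp ha.le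
  have hηb : 0 < nagyEta p b := nagyEta_pos hp (ha.trans hab).le
  have hK : 0 < nagyAction p a b := nagyAction_pos hp ha hab
  rw [setIntegral_beta_integrand_eq_mul_nagyAction hp ha hab, nagyConst_eq_rpow hp ha hab,
    ← Real.rpow_mul (by positivity), mul_one_div, neg_div]

theorem integral_abs_rpow_root_le (hp : 1 < p) (ha : 0 < a) (hab : a < b)
    (hθ : θ = p * (b - a) / (b * nagyEta p a)) {u : ℝ → ℝ} (hu : Differentiable ℝ u)
    (hua : Integrable fun x => |u x| ^ a) (hup : Integrable fun x => |deriv u x| ^ p) :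
    (∫ x, |u x| ^ b) ^ (1 / b) ≤ nagyConst p a b ^ (1 / (b * nagyEta p a)) *
      (∫ x, |u x| ^ a) ^ ((1 - θ) / a) * (∫ x, |deriv u x| ^ p) ^ (θ / p) := by
  have hb : 0 < b := ha.trans hab
  have hηa : 0 < nagyEta p a := nagyEta_pos hp ha.le
  have hB := integral_abs_rpow_nonneg u b
  rw [← rpow_nagyEta_rpow_root hp ha hB, ← mul_rpow_nagyEta_mul_rpow_root hp ha hab
    (integral_abs_rpow_nonneg u a) (integral_abs_rpow_nonneg (deriv u) p) hθ]
  exact Real.rpow_le_rpow (Real.rpow_nonneg hB _)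
    (integral_abs_rpow_rpow_le hp ha hab hu hua hup) (by positivity)

lemma integrable_abs_deriv_nagyExtremal_rpow (hp : 1 < p) (ha : 0 < a) (hab : a < b) :
    Integrable fun x => |deriv (nagyExtremal p a b) x| ^ p := by
  simp only [abs_deriv_nagyExtremal_rpow hp ha hab]
  exact integrable_nagyPotential_nagyExtremal hp ha hab

lemma integral_abs_deriv_nagyExtremal_rpow (hp : 1 < p) (ha : 0 < a) (hab : a < b) :
    ∫ x, |deriv (nagyExtremal p a b) x| ^ p = 2 * nagyAction p a b := by
  simp only [abs_deriv_nagyExtremal_rpow hp ha hab]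
  exact integral_nagyPotential_nagyExtremal hp ha hab

theorem integral_abs_nagyExtremal_rpow_root_eq (hp : 1 < p) (ha : 0 < a) (hab : a < b)
    (hθ : θ = p * (b - a) / (b * nagyEta p a)) :
    (∫ x, |nagyExtremal p a b x| ^ b) ^ (1 / b) = nagyConst p a b ^ (1 / (b * nagyEta p a)) *
      (∫ x, |nagyExtremal p a b x| ^ a) ^ ((1 - θ) / a) *
        (∫ x, |deriv (nagyExtremal p a b) x| ^ p) ^ (θ / p) := by
  rw [← rpow_nagyEta_rpow_root hp ha (integral_abs_rpow_nonneg _ b),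
    ← mul_rpow_nagyEta_mul_rpow_root hp ha hab (integral_abs_rpow_nonneg _ a)
      (integral_abs_rpow_nonneg _ p) hθ,
    integral_abs_nagyExtremal_rpow_rpow_eq hp ha hab,
    integral_abs_deriv_nagyExtremal_rpow hp ha hab]

theorem nagyConst_root_le_of_forall (hp : 1 < p) (ha : 0 < a) (hab : a < b)
    (hθ : θ = p * (b - a) / (b * nagyEta p a)) {C : ℝ}
    (hC : ∀ u : ℝ → ℝ, ContDiff ℝ 1 u → Integrable (fun x => |u x| ^ a) →
      Integrable (fun x => |deriv u x| ^ p) →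
      (∫ x, |u x| ^ b) ^ (1 / b) ≤
        C * (∫ x, |u x| ^ a) ^ ((1 - θ) / a) * (∫ x, |deriv u x| ^ p) ^ (θ / p)) :
    nagyConst p a b ^ (1 / (b * nagyEta p a)) ≤ C := by
  have hA := integral_abs_nagyExtremal_rpow_pos hp ha hab
  have hD : 0 < ∫ x, |deriv (nagyExtremal p a b) x| ^ p := by
    rw [integral_abs_deriv_nagyExtremal_rpow hp ha hab]
    exact mul_pos two_pos (nagyAction_pos hp ha hab)
  have hle := hC _ (contDiff_nagyExtremal hp ha hab) (integrable_abs_nagyExtremal_rpow hp ha hab)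
    (integrable_abs_deriv_nagyExtremal_rpow hp ha hab)
  rw [integral_abs_nagyExtremal_rpow_root_eq hp ha hab hθ] at hle
  exact le_of_mul_le_mul_right (le_of_mul_le_mul_right hle (Real.rpow_pos_of_pos hD _))
    (Real.rpow_pos_of_pos hA _)

end Sharpness

theorem stmt15_general (p q m : ℝ) (hp : 1 < p) (hq : -1 < q) (hqm : q < m)
    (η₁ η₂ θ l C : ℝ)
    (hη₁ : η₁ = (p - 1) * (m + 1) + p)
    (hη₂ : η₂ = (p - 1) * (q + 1) + p)
    (hθ : θ = p * (m - q) / ((m + 1) * η₂))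
    (hl : l = (m - q) / ((m + 1) * η₂))
    (hC : C = ((2 : ℝ) ^ p * (p - 1) ^ (1 - p) * η₁ ^ (η₁ / (m - q)) *
        (m - q) ^ (1 - 2 * p) * η₂ ^ (-(η₂ / (m - q))) *
        (∫ t in Ioo (0 : ℝ) 1,
          t ^ (η₂ / (p * (m - q)) - 1) * (1 - t) ^ ((2 * p - 1) / p - 1)) ^ p) ^ (-l)) :
    (∀ u : ℝ → ℝ, Differentiable ℝ u →
      Integrable (fun x => |u x| ^ (q + 1)) →
      Integrable (fun x => |deriv u x| ^ p) →
      (∫ x : ℝ, |u x| ^ (m + 1)) ^ (1 / (m + 1)) ≤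
        C * (∫ x : ℝ, |u x| ^ (q + 1)) ^ ((1 - θ) / (q + 1)) *
          (∫ x : ℝ, |deriv u x| ^ p) ^ (θ / p)) ∧
    (∀ C' : ℝ, (∀ u : ℝ → ℝ, ContDiff ℝ 1 u →
      Integrable (fun x => |u x| ^ (q + 1)) →
      Integrable (fun x => |deriv u x| ^ p) →
      (∫ x : ℝ, |u x| ^ (m + 1)) ^ (1 / (m + 1)) ≤
        C' * (∫ x : ℝ, |u x| ^ (q + 1)) ^ ((1 - θ) / (q + 1)) *
          (∫ x : ℝ, |deriv u x| ^ p) ^ (θ / p)) → C ≤ C') := by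
  have ha : 0 < q + 1 := neg_lt_iff_pos_add.1 hq
  have hab : q + 1 < m + 1 := add_lt_add_left hqm 1
  have hsub : m - q = m + 1 - (q + 1) := (add_sub_add_right_eq_sub m q 1).symm
  change η₁ = nagyEta p (m + 1) at hη₁
  change η₂ = nagyEta p (q + 1) at hη₂
  rw [hη₂, hsub] at hθ
  have hCroot : C = nagyConst p (q + 1) (m + 1) ^ (1 / ((m + 1) * nagyEta p (q + 1))) := by
    rw [hC, hl, hη₁, hη₂, hsub, nagyConst_root_eq hp ha hab]
  rw [hCroot]
  exact ⟨fun u hu hua hup => integral_abs_rpow_root_le hp ha hab hθ hu hua hup,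
    fun C' hC' => nagyConst_root_le_of_forall hp ha hab hθ hC'⟩

/-- The sharp one-dimensional L^m-type Gagliardo-Nirenberg (Nagy)
inequality `‖u‖_{m+1} ≤ C ‖u‖_{q+1}^{1-θ} ‖u'‖_p^θ`, whose optimal constant is
given explicitly through the complete Beta function. -/
theorem stmt15 (p q m : ℝ) (hp : 1 < p) (hq : 0 < q) (hqm : q < m)
    (η₁ η₂ θ l C : ℝ)
    (hη₁ : η₁ = (p - 1) * (m + 1) + p)
    (hη₂ : η₂ = (p - 1) * (q + 1) + p)
    (hθ : θ = p * (m - q) / ((m + 1) * η₂))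
    (hl : l = (m - q) / ((m + 1) * η₂))
    (hC : C = ((2:ℝ) ^ p * (p - 1) ^ (1 - p) * η₁ ^ (η₁ / (m - q)) *
        (m - q) ^ (1 - 2 * p) * η₂ ^ (-(η₂ / (m - q))) *
        (∫ t in Ioo (0:ℝ) 1,
          t ^ (η₂ / (p * (m - q)) - 1) * (1 - t) ^ ((2 * p - 1) / p - 1)) ^ p) ^ (-l)) :
    (∀ u : ℝ → ℝ, ContDiff ℝ 1 u →
      Integrable (fun x => |u x| ^ (q + 1)) →
      Integrable (fun x => |deriv u x| ^ p) →
      (∫ x : ℝ, |u x| ^ (m + 1)) ^ (1 / (m + 1)) ≤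
        C * (∫ x : ℝ, |u x| ^ (q + 1)) ^ ((1 - θ) / (q + 1)) *
          (∫ x : ℝ, |deriv u x| ^ p) ^ (θ / p)) ∧
    (∀ C' : ℝ, (∀ u : ℝ → ℝ, ContDiff ℝ 1 u →
      Integrable (fun x => |u x| ^ (q + 1)) →
      Integrable (fun x => |deriv u x| ^ p) →
      (∫ x : ℝ, |u x| ^ (m + 1)) ^ (1 / (m + 1)) ≤
        C' * (∫ x : ℝ, |u x| ^ (q + 1)) ^ ((1 - θ) / (q + 1)) *
          (∫ x : ℝ, |deriv u x| ^ p) ^ (θ / p)) → C ≤ C') := by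
  obtain ⟨hle, hsharp⟩ :=
    stmt15_general p q m hp (neg_one_lt_zero.trans hq) hqm η₁ η₂ θ l C hη₁ hη₂ hθ hl hC
  exact ⟨fun u hu => hle u (hu.differentiable one_ne_zero), hsharp⟩
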